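/- Let X be an infinite separable locally compact metric space, let f : X → X be a continuous weakly mixing map with a fixed point, let β denote the diameter of X (β = ∞ if X is unbounded), and let δ = inf_{n≥1} sup_{x∈X} ρ(fⁿ(x), x). Then there exist countably infinitely many pairwise disjoint Cantor sets S⁽¹⁾, S⁽²⁾, S⁽³⁾, … of totally transitive points of f whose union S = ⋃_{j≥1} S⁽ʲ⁾ is dense in X and is a β-scrambled set of fⁿ for every n ≥ 1, and such that the set Ŝ = ⋃_{i≥0} fⁱ(S) is dense in X, invariant under f (f(Ŝ) ⊆ Ŝ), and is a δ-scrambled set of fⁿ for every n ≥ 1: for all distinct c, d ∈ Ŝ and every n ≥ 1, liminf_{k→∞} ρ(f^{nk}(c), f^{nk}(d)) = 0 and limsup_{k→∞} ρ(f^{nk}(c), f^{nk}(d)) ≥ δ. -/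

import Mathlib

open Filter ENNReal

/-- `f` is (topologically) weakly mixing. -/
def WeaklyMixing {X : Type*} [TopologicalSpace X] (f : X → X) : Prop :=
  ∀ U₁ U₂ V₁ V₂ : Set X, IsOpen U₁ → IsOpen U₂ → IsOpen V₁ → IsOpen V₂ →
    U₁.Nonempty → U₂.Nonempty → V₁.Nonempty → V₂.Nonempty →
    ∃ n : ℕ, 1 ≤ n ∧ (f^[n] '' U₁ ∩ V₁).Nonempty ∧ (f^[n] '' U₂ ∩ V₂).Nonempty

/-- A Cantor set: a nonempty compact, perfect, totally disconnected subset. -/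
def IsCantorSet {X : Type*} [TopologicalSpace X] (C : Set X) : Prop :=
  C.Nonempty ∧ IsCompact C ∧ Perfect C ∧ IsTotallyDisconnected C

/-- `x` is a totally transitive point of `g`. -/
def TotallyTransitivePoint {Y : Type*} [TopologicalSpace Y] (g : Y → Y) (x : Y) : Prop :=
  ∀ k : ℕ, 1 ≤ k → Dense (Set.range fun m : ℕ => g^[k * m] x)

section Myc
open Set TopologicalSpace Topology

/-- A locally compact separable metric space is Polish. -/
theorem polish_of_lc {X : Type*} [MetricSpace X] [SeparableSpace X] [LocallyCompactSpace X] :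
    PolishSpace X := by
  let c : X → UniformSpace.Completion X := fun x => (x : UniformSpace.Completion X)
  have hemb : IsEmbedding c := UniformSpace.Completion.isUniformEmbedding_coe X |>.isEmbedding
  have hd : DenseRange c := UniformSpace.Completion.denseRange_coe
  have hop : IsOpen (range c) := by
    rw [isOpen_iff_mem_nhds]
    rintro _ ⟨x, rfl⟩
    obtain ⟨K, hK, hxK⟩ := exists_compact_mem_nhds x
    rw [hemb.isInducing.nhds_eq_comap, mem_comap] at hxK
    obtain ⟨t, ht, htK⟩ := hxK
    obtain ⟨W, hWt, hW, hxW⟩ := mem_nhds_iff.1 ht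
    refine mem_of_superset (hW.mem_nhds hxW) ?_
    have h1 : W ⊆ closure (W ∩ range c) := hd.open_subset_closure_inter hW
    have h2 : W ∩ range c ⊆ c '' K := by
      rintro _ ⟨hy, y, rfl⟩
      exact ⟨y, htK (hWt hy), rfl⟩
    have h3 : IsClosed (c '' K) := (hK.image hemb.continuous).isClosed
    exact h1.trans ((closure_minimal h2 h3).trans (image_subset_range _ _))
  have : SeparableSpace (UniformSpace.Completion X) := hd.separableSpace hemb.continuous
  have : PolishSpace (UniformSpace.Completion X) := inferInstance
  have : PolishSpace (range c) := hop.polishSpace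
  exact hemb.toHomeomorph.isClosedEmbedding.polishSpace

abbrev KK := ℕ × (ℕ → Bool)

/-- truncation -/
def trunc (n : ℕ) (p : KK) : KK := (p.1, fun i => if i < n then p.2 i else false)

theorem trunc_lc (n : ℕ) : IsLocallyConstant (trunc n) := by
  rw [IsLocallyConstant.iff_eventually_eq]
  intro p
  have h1 : ∀ᶠ q : KK in 𝓝 p, q.1 = p.1 :=
    ((isOpen_discrete {p.1}).preimage continuous_fst).mem_nhds rfl
  have h2 : ∀ᶠ q : KK in 𝓝 p, ∀ i ∈ Finset.range n, q.2 i = p.2 i := by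
    rw [Filter.eventually_all_finset]
    intro i _
    have : Continuous (fun q : KK => q.2 i) := by fun_prop
    exact ((isOpen_discrete {p.2 i}).preimage this).mem_nhds rfl
  filter_upwards [h1, h2] with q hq1 hq2
  simp only [trunc, hq1, Prod.mk.injEq, true_and]
  funext i
  split_ifs with h
  · exact hq2 i (by simpa using h)
  · rfl

theorem nhds_trunc (p : KK) (V : Set KK) (hV : V ∈ 𝓝 p) :
    ∃ m, ∃ V' ∈ 𝓝 p, V' ⊆ V ∧ ∀ n ≥ m, ∀ q ∈ V', trunc n q ∈ V' := by
  obtain ⟨j, x⟩ := p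
  rw [nhds_prod_eq, mem_prod_iff] at hV
  obtain ⟨A, hA, B, hB, hAB⟩ := hV
  have hjA : j ∈ A := mem_of_mem_nhds hA
  obtain ⟨t, ht, htB, hxt⟩ := mem_nhds_iff.1 hB
  rw [isOpen_pi_iff] at htB
  obtain ⟨I, u, hu, hI⟩ := htB x hxt
  refine ⟨I.sup id + 1, {j} ×ˢ {y | ∀ i ∈ I, y i = x i}, ?_, ?_, ?_⟩
  · rw [nhds_prod_eq]
    refine prod_mem_prod (by simp) ?_
    change ∀ᶠ y in 𝓝 x, ∀ i ∈ I, y i = x i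
    rw [Filter.eventually_all_finset]
    intro i _
    have hc : Continuous fun y : ℕ → Bool => y i := by fun_prop
    exact ((isOpen_discrete {x i}).preimage hc).mem_nhds rfl
  · rintro ⟨j', y⟩ ⟨hj', hy⟩
    simp only [mem_singleton_iff] at hj'
    subst hj'
    refine hAB ⟨hjA, ht (hI ?_)⟩
    intro i hi
    have := hy i hi
    simp only at this ⊢
    rw [this]
    exact (hu i hi).2
  · rintro n hn ⟨j', y⟩ ⟨hj', hy⟩
    refine ⟨hj', fun i hi => ?_⟩
    have : i ≤ I.sup id := Finset.le_sup (f := id) hi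
    simp only [trunc]
    rw [if_pos (by omega)]
    exact hy i hi

/-- Approximation by dense-valued maps. -/
theorem approx {X : Type*} [MetricSpace X] (φ : C(KK, X)) (ψ : ℕ → C(KK, X))
    (h : ∀ n p, dist (ψ n p) (φ (trunc n p)) < 1 / ((n : ℝ) + 1) ∨ ψ n p = φ p) :
    Tendsto ψ atTop (𝓝 φ) := by
  rw [ContinuousMap.tendsto_iff_tendstoLocallyUniformly, Metric.tendstoLocallyUniformly_iff]
  intro ε hε p
  obtain ⟨m, V', hV', hVV, hm⟩ := nhds_trunc p (φ ⁻¹' (Metric.ball (φ p) (ε / 4)))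
    (φ.continuous.continuousAt.preimage_mem_nhds (Metric.ball_mem_nhds _ (by positivity)))
  refine ⟨V', hV', ?_⟩
  obtain ⟨N, hN⟩ := exists_nat_one_div_lt (show 0 < ε / 4 by positivity)
  filter_upwards [eventually_ge_atTop m, eventually_ge_atTop N] with n hnm hnN q hq
  rcases h n q with h | h
  · have a1 : dist (φ q) (φ p) < ε / 4 := hVV hq
    have a2 : dist (φ (trunc n q)) (φ p) < ε / 4 := hVV (hm n hnm q hq)
    have a3 : 1 / ((n : ℝ) + 1) ≤ 1 / ((N : ℝ) + 1) := by gcongr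
    have a4 := dist_triangle (φ q) (φ p) (ψ n q)
    have a5 := dist_triangle (φ p) (φ (trunc n q)) (ψ n q)
    rw [dist_comm (φ p) (φ (trunc n q))] at a5
    rw [dist_comm (ψ n q)] at h
    linarith
  · rw [h]; simpa using hε

theorem dense_pair {X : Type*} [TopologicalSpace X] [SecondCountableTopology X] [BaireSpace X]
    (G : Set (X × X)) (hG : IsOpen G) (hd : Dense G) :
    ∃ D₁ D₂ : Set X, Dense D₁ ∧ Dense D₂ ∧ ∀ x ∈ D₁, ∀ y ∈ D₂, (x, y) ∈ G := by
  let E : Set X := ⋂ B ∈ countableBasis X, {x | ∃ y ∈ B, (x, y) ∈ G}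
  have hE : Dense E := by
    refine dense_biInter_of_isOpen ?_ (countable_countableBasis X) ?_
    · intro B hB
      have : {x | ∃ y ∈ B, (x, y) ∈ G} = Prod.fst '' (G ∩ (univ ×ˢ B)) := by
        ext x; simp [and_comm]
      rw [this]
      exact isOpenMap_fst _ (hG.inter (isOpen_univ.prod (isOpen_of_mem_countableBasis hB)))
    · intro B hB
      rw [dense_iff_inter_open]
      intro U hU hUn
      obtain ⟨⟨x, y⟩, hxy, hxyG⟩ := hd.inter_open_nonempty (U ×ˢ B)
        (hU.prod (isOpen_of_mem_countableBasis hB))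
        (hUn.prod (nonempty_of_mem_countableBasis hB))
      exact ⟨x, hxy.1, y, hxy.2, hxyG⟩
  obtain ⟨D₁, hD₁E, hD₁c, hD₁⟩ := hE.exists_countable_dense_subset
  refine ⟨D₁, ⋂ x ∈ D₁, {y | (x, y) ∈ G}, hD₁, ?_, ?_⟩
  · refine dense_biInter_of_isOpen ?_ hD₁c ?_
    · intro x _
      exact hG.preimage (by fun_prop : Continuous fun y => (x, y))
    · intro x hx
      rw [(isBasis_countableBasis X).dense_iff]
      intro B hB _
      have := mem_iInter₂.1 (hD₁E hx) B hB
      obtain ⟨y, hy, hyG⟩ := this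
      exact ⟨y, hy, hyG⟩
  · intro x hx y hy
    exact mem_iInter₂.1 hy x hx

/-- cylinders -/
def cyl (c : ℕ × Σ n : ℕ, Fin n → Bool) : Set KK :=
  {p | p.1 = c.1 ∧ ∀ i : Fin c.2.1, p.2 i = c.2.2 i}

theorem cyl_clopen (c) : IsClopen (cyl c) := by
  have : cyl c = (Prod.fst ⁻¹' {c.1}) ∩ ⋂ i : Fin c.2.1, (fun p : KK => p.2 i) ⁻¹' {c.2.2 i} := by
    ext p; simp [cyl]
  rw [this]
  refine ((isClopen_discrete _).preimage continuous_fst).inter (isClopen_iInter_of_finite ?_)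
  intro i
  exact (isClopen_discrete _).preimage (by fun_prop)

theorem cyl_compact (c) : IsCompact (cyl c) := by
  refine ((isCompact_singleton (x := c.1)).prod (isCompact_univ (X := ℕ → Bool))).of_isClosed_subset
    (cyl_clopen c).1 ?_
  rintro p ⟨hp, _⟩
  exact ⟨hp, trivial⟩

theorem cyl_sep (p q : KK) (h : p ≠ q) : ∃ c d, p ∈ cyl c ∧ q ∈ cyl d ∧ Disjoint (cyl c) (cyl d) := by
  by_cases h1 : p.1 = q.1
  · have h2 : p.2 ≠ q.2 := fun h2 => h (Prod.ext h1 h2)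
    obtain ⟨m, hm⟩ := Function.ne_iff.1 h2
    refine ⟨⟨p.1, m + 1, fun i => p.2 i⟩, ⟨q.1, m + 1, fun i => q.2 i⟩, ⟨rfl, fun _ => rfl⟩,
      ⟨rfl, fun _ => rfl⟩, ?_⟩
    rw [Set.disjoint_left]
    rintro r ⟨_, hr⟩ ⟨_, hr'⟩
    exact hm ((hr ⟨m, by simp⟩).symm.trans (hr' ⟨m, by simp⟩))
  · refine ⟨⟨p.1, 0, fun i => p.2 i⟩, ⟨q.1, 0, fun i => q.2 i⟩, ⟨rfl, fun _ => rfl⟩,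
      ⟨rfl, fun _ => rfl⟩, ?_⟩
    rw [Set.disjoint_left]
    rintro r ⟨hr, _⟩ ⟨hr', _⟩
    exact h1 (hr.symm.trans hr')

theorem open_pair {X : Type*} [TopologicalSpace X] (G : Set (X × X)) (hG : IsOpen G)
    (C D : Set KK) (hC : IsCompact C) (hD : IsCompact D) :
    IsOpen {φ : C(KK, X) | ∀ p ∈ C, ∀ q ∈ D, (φ p, φ q) ∈ G} := by
  have h1 : IsOpen {ψ : C(KK × KK, X × X) | MapsTo ψ (C ×ˢ D) G} :=
    ContinuousMap.isOpen_setOfPred_mapsTo (hC.prod hD) hG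
  have h2 : Continuous (fun φ : C(KK, X) => φ.prodMap φ) := by
    refine ContinuousMap.continuous_of_continuous_uncurry _ ?_
    have : Continuous fun x : C(KK, X) × (KK × KK) => (x.1 x.2.1, x.1 x.2.2) := by fun_prop
    exact this
  convert h1.preimage h2 using 1
  ext φ
  constructor
  · intro h r hr
    exact h r.1 hr.1 r.2 hr.2
  · intro h p hp q hq
    exact h (x := (p, q)) ⟨hp, hq⟩

theorem dense_pairmap {X : Type*} [MetricSpace X] [SecondCountableTopology X] [BaireSpace X]
    (G : Set (X × X)) (hG : IsOpen G) (hd : Dense G)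
    (C D : Set KK) (hC : IsClopen C) (hCD : Disjoint C D) :
    Dense {φ : C(KK, X) | ∀ p ∈ C, ∀ q ∈ D, (φ p, φ q) ∈ G} := by
  classical
  obtain ⟨D₁, D₂, h1, h2, h12⟩ := dense_pair G hG hd
  intro φ
  have e1 : ∀ (n : ℕ) (x : X), ∃ y ∈ D₁, dist y x < 1 / ((n : ℝ) + 1) := fun n x => by
    obtain ⟨y, hy, h⟩ := h1.exists_dist_lt x (show 0 < 1 / ((n : ℝ) + 1) by positivity)
    exact ⟨y, hy, by rwa [dist_comm]⟩
  have e2 : ∀ (n : ℕ) (x : X), ∃ y ∈ D₂, dist y x < 1 / ((n : ℝ) + 1) := fun n x => by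
    obtain ⟨y, hy, h⟩ := h2.exists_dist_lt x (show 0 < 1 / ((n : ℝ) + 1) by positivity)
    exact ⟨y, hy, by rwa [dist_comm]⟩
  choose a ha ha' using e1
  choose b hb hb' using e2
  have hac : ∀ n, Continuous fun p => a n (φ (trunc n p)) := fun n =>
    ((trunc_lc n).comp (fun p => a n (φ p))).continuous
  have hbc : ∀ n, Continuous fun p => b n (φ (trunc n p)) := fun n =>
    ((trunc_lc n).comp (fun p => b n (φ p))).continuous
  let ψ : ℕ → C(KK, X) := fun n =>
    ⟨C.piecewise (fun p => a n (φ (trunc n p))) (fun p => b n (φ (trunc n p))), by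
      refine continuous_piecewise ?_ (hac n).continuousOn (hbc n).continuousOn
      simp [hC.frontier_eq]⟩
  refine mem_closure_of_tendsto (approx φ ψ ?_) (Eventually.of_forall ?_)
  · intro n p
    left
    by_cases hp : p ∈ C
    · simp only [ψ, ContinuousMap.coe_mk, piecewise_eq_of_mem _ _ _ hp]; exact ha' _ _
    · simp only [ψ, ContinuousMap.coe_mk, piecewise_eq_of_notMem _ _ _ hp]; exact hb' _ _
  · intro n p hp q hq
    have hq' : q ∉ C := fun h => Set.disjoint_left.1 hCD h hq
    simp only [ψ, ContinuousMap.coe_mk, piecewise_eq_of_mem _ _ _ hp,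
      piecewise_eq_of_notMem _ _ _ hq']
    exact h12 _ (ha _ _) _ (hb _ _)

theorem dense_hit {X : Type*} [MetricSpace X] (B : Set X) (hB : B.Nonempty) :
    Dense {φ : C(KK, X) | ∃ p, φ p ∈ B} := by
  classical
  obtain ⟨b, hb⟩ := hB
  intro φ
  let ψ : ℕ → C(KK, X) := fun n =>
    ⟨({p : KK | p.1 = n}).piecewise (fun _ => b) φ, by
      refine continuous_piecewise ?_ continuous_const.continuousOn φ.continuous.continuousOn
      have : IsClopen {p : KK | p.1 = n} := (isClopen_discrete {n}).preimage continuous_fst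
      simp [this.frontier_eq]⟩
  refine mem_closure_of_tendsto (f := ψ) (b := atTop) ?_ (Eventually.of_forall ?_)
  · rw [ContinuousMap.tendsto_iff_tendstoLocallyUniformly, Metric.tendstoLocallyUniformly_iff]
    intro ε hε p
    refine ⟨{q | q.1 = p.1}, ?_, ?_⟩
    · exact ((isOpen_discrete {p.1}).preimage continuous_fst).mem_nhds rfl
    · filter_upwards [eventually_gt_atTop p.1] with n hn q hq
      have : q ∉ {p : KK | p.1 = n} := by
        simp only [mem_ofPred_eq] at hq ⊢; omega
      simp only [ψ, ContinuousMap.coe_mk, piecewise_eq_of_notMem _ _ _ this]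
      simpa using hε
  · intro n
    refine ⟨(n, fun _ => false), ?_⟩
    simp only [ψ, ContinuousMap.coe_mk]
    rwa [piecewise_eq_of_mem _ _ _ (by simp)]

theorem mycielski {X : Type*} [TopologicalSpace X] [PolishSpace X]
    {ι : Type*} [Countable ι] (G : ι → Set (X × X)) (hG : ∀ i, IsOpen (G i))
    (hd : ∀ i, Dense (G i)) [Nonempty X] :
    ∃ φ : C(KK, X), (∀ p q, p ≠ q → ∀ i, (φ p, φ q) ∈ G i) ∧ DenseRange φ := by
  let := upgradeIsCompletelyMetrizable X
  have hc : CompleteSpace C(KK, X) := inferInstance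
  have hB : BaireSpace C(KK, X) := inferInstance
  let J := ι × {cd : (ℕ × Σ n : ℕ, Fin n → Bool) × (ℕ × Σ n : ℕ, Fin n → Bool) //
    Disjoint (cyl cd.1) (cyl cd.2)}
  have d1 : Dense (⋂ j : J ⊕ countableBasis X, Sum.elim
      (fun j : J => {φ : C(KK, X) | ∀ p ∈ cyl j.2.1.1, ∀ q ∈ cyl j.2.1.2, (φ p, φ q) ∈ G j.1})
      (fun B : countableBasis X => {φ : C(KK, X) | ∃ p, φ p ∈ B.1}) j) := by
    have : Countable (countableBasis X) := (countable_countableBasis X).to_subtype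
    refine dense_iInter_of_isOpen ?_ ?_
    · rintro (j | B)
      · exact open_pair _ (hG _) _ _ (cyl_compact _) (cyl_compact _)
      · have : {φ : C(KK, X) | ∃ p, φ p ∈ B.1} = ⋃ p, (fun φ : C(KK, X) => φ p) ⁻¹' B.1 := by
          ext; simp
        simp only [Sum.elim_inr, this]
        exact isOpen_iUnion fun p => (isOpen_of_mem_countableBasis B.2).preimage (by fun_prop)
    · rintro (j | B)
      · exact dense_pairmap _ (hG _) (hd _) _ _ (cyl_clopen _) j.2.2
      · exact dense_hit _ (nonempty_of_mem_countableBasis B.2)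
  have : Nonempty C(KK, X) := ⟨ContinuousMap.const _ (Classical.arbitrary X)⟩
  obtain ⟨φ, hφ⟩ := d1.nonempty
  rw [mem_iInter] at hφ
  refine ⟨φ, ?_, ?_⟩
  · intro p q hpq i
    obtain ⟨c, d, hc, hd, hcd⟩ := cyl_sep p q hpq
    exact hφ (Sum.inl ⟨i, ⟨(c, d), hcd⟩⟩) p hc q hd
  · unfold DenseRange
    rw [(isBasis_countableBasis X).dense_iff]
    intro B hB _
    obtain ⟨p, hp⟩ := hφ (Sum.inr ⟨B, hB⟩)
    exact ⟨φ p, hp, p, rfl⟩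

end Myc

section Dyn
open Set TopologicalSpace Topology

/-- transitivity of the pair `(a, b)` under all powers of `f × f`. -/
def PT {X : Type*} [TopologicalSpace X] (f : X → X) (a b : X) : Prop :=
  ∀ n : ℕ, 1 ≤ n → ∀ U V : Set X, IsOpen U → IsOpen V → U.Nonempty → V.Nonempty →
    ∃ k : ℕ, 1 ≤ k ∧ f^[n * k] a ∈ U ∧ f^[n * k] b ∈ V

variable {X : Type*} [TopologicalSpace X] {f : X → X}

theorem wm_hit (hwm : WeaklyMixing f) (U₁ U₂ V₁ V₂ : Set X) (h1 : IsOpen U₁) (h2 : IsOpen U₂)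
    (h3 : IsOpen V₁) (h4 : IsOpen V₂) (n1 : U₁.Nonempty) (n2 : U₂.Nonempty) (n3 : V₁.Nonempty)
    (n4 : V₂.Nonempty) :
    ∃ m : ℕ, 1 ≤ m ∧ (∃ x ∈ U₁, f^[m] x ∈ V₁) ∧ (∃ x ∈ U₂, f^[m] x ∈ V₂) := by
  obtain ⟨m, hm, ⟨_, ⟨x, hx, rfl⟩, hx'⟩, ⟨_, ⟨y, hy, rfl⟩, hy'⟩⟩ :=
    hwm U₁ U₂ V₁ V₂ h1 h2 h3 h4 n1 n2 n3 n4
  exact ⟨m, hm, ⟨x, hx, hx'⟩, ⟨y, hy, hy'⟩⟩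

theorem wm_denseRange (hwm : WeaklyMixing f) : DenseRange f := by
  unfold DenseRange
  rw [dense_iff_inter_open]
  intro U hU hUn
  obtain ⟨m, hm, ⟨x, _, hx'⟩, _⟩ := wm_hit hwm U U U U hU hU hU hU hUn hUn hUn hUn
  obtain ⟨m, rfl⟩ : ∃ m', m = m' + 1 := ⟨m - 1, by omega⟩
  rw [Function.iterate_succ_apply'] at hx'
  exact ⟨_, hx', _, rfl⟩

theorem wm_denseRange_iter (hf : Continuous f) (hwm : WeaklyMixing f) (i : ℕ) :
    DenseRange f^[i] := by
  induction i with
  | zero => exact denseRange_id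
  | succ i ih =>
    rw [Function.iterate_succ']
    exact (wm_denseRange hwm).comp ih hf

theorem wm_inter (hf : Continuous f) (hwm : WeaklyMixing f) [Nonempty X] (l : ℕ) (U V : ℕ → Set X)
    (hU : ∀ i, IsOpen (U i)) (hV : ∀ i, IsOpen (V i)) (hUn : ∀ i, (U i).Nonempty)
    (hVn : ∀ i, (V i).Nonempty) :
    ∃ P Q : Set X, IsOpen P ∧ IsOpen Q ∧ P.Nonempty ∧ Q.Nonempty ∧
      ∀ m, (∃ x ∈ P, f^[m] x ∈ Q) → ∀ i < l, ∃ x ∈ U i, f^[m] x ∈ V i := by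
  induction l with
  | zero => exact ⟨univ, univ, isOpen_univ, isOpen_univ, univ_nonempty, univ_nonempty, by simp⟩
  | succ l ih =>
    obtain ⟨P, Q, hP, hQ, hPn, hQn, h⟩ := ih
    obtain ⟨k, -, ⟨x, hx, hx'⟩, ⟨y, hy, hy'⟩⟩ := wm_hit hwm P Q (U l) (V l) hP hQ (hU l) (hV l)
      hPn hQn (hUn l) (hVn l)
    refine ⟨P ∩ f^[k] ⁻¹' U l, Q ∩ f^[k] ⁻¹' V l, hP.inter ((hU l).preimage (hf.iterate k)),
      hQ.inter ((hV l).preimage (hf.iterate k)), ⟨x, hx, hx'⟩, ⟨y, hy, hy'⟩, ?_⟩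
    rintro m ⟨z, ⟨hz1, hz2⟩, hz3, hz4⟩ i hi
    rcases Nat.lt_succ_iff_lt_or_eq.1 hi with hi | rfl
    · exact h m ⟨z, hz1, hz3⟩ i hi
    · refine ⟨f^[k] z, hz2, ?_⟩
      rw [← Function.iterate_add_apply, Nat.add_comm, Function.iterate_add_apply]
      exact hz4

theorem wm_mult (hf : Continuous f) (hwm : WeaklyMixing f) [Nonempty X] (n : ℕ) (hn : 1 ≤ n)
    (A B U V : Set X) (hA : IsOpen A) (hB : IsOpen B) (hU : IsOpen U) (hV : IsOpen V)
    (nA : A.Nonempty) (nB : B.Nonempty) (nU : U.Nonempty) (nV : V.Nonempty) :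
    ∃ k : ℕ, 1 ≤ k ∧ (∃ x ∈ A, f^[n * k] x ∈ U) ∧ (∃ x ∈ B, f^[n * k] x ∈ V) := by
  have pre : ∀ W : Set X, IsOpen W → W.Nonempty → ∀ i : ℕ, (f^[i] ⁻¹' W).Nonempty := by
    intro W hW nW i
    obtain ⟨x, hx⟩ := (wm_denseRange_iter hf hwm i).exists_mem_open hW nW
    exact ⟨x, hx⟩
  obtain ⟨P, Q, hP, hQ, nP, nQ, h⟩ := wm_inter hf hwm n (fun _ => A) (fun i => f^[i] ⁻¹' U)
    (fun _ => hA) (fun i => hU.preimage (hf.iterate i)) (fun _ => nA) (pre U hU nU)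
  obtain ⟨P', Q', hP', hQ', nP', nQ', h'⟩ := wm_inter hf hwm n (fun _ => B) (fun i => f^[i] ⁻¹' V)
    (fun _ => hB) (fun i => hV.preimage (hf.iterate i)) (fun _ => nB) (pre V hV nV)
  obtain ⟨m, hm, h1, h2⟩ := wm_hit hwm P P' Q Q' hP hP' hQ hQ' nP nP' nQ nQ'
  obtain ⟨i, hi, k, hk⟩ : ∃ i < n, ∃ k, m + i = n * k := by
    by_cases h0 : m % n = 0
    · exact ⟨0, by omega, m / n, by rw [Nat.add_zero, Nat.mul_div_cancel' (Nat.dvd_of_mod_eq_zero h0)]⟩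
    · have h3 := Nat.mod_lt m (show n > 0 by omega)
      refine ⟨n - m % n, by omega, m / n + 1, ?_⟩
      have := Nat.div_add_mod m n
      rw [Nat.mul_add]
      omega
  refine ⟨k, ?_, ?_, ?_⟩
  · rcases Nat.eq_zero_or_pos k with rfl | h
    · simp at hk; omega
    · exact h
  · obtain ⟨x, hx, hx'⟩ := h m h1 i hi
    refine ⟨x, hx, ?_⟩
    rw [← hk, Nat.add_comm, Function.iterate_add_apply]; exact hx'
  · obtain ⟨x, hx, hx'⟩ := h' m h2 i hi
    refine ⟨x, hx, ?_⟩
    rw [← hk, Nat.add_comm, Function.iterate_add_apply]; exact hx'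

theorem PT.frequently {a b : X} (h : PT f a b) (n : ℕ) (hn : 1 ≤ n)
    (W : Set (X × X)) (hW : IsOpen W) (nW : W.Nonempty) :
    ∃ᶠ k : ℕ in atTop, (f^[n * k] a, f^[n * k] b) ∈ W := by
  obtain ⟨⟨x, y⟩, hxy⟩ := nW
  obtain ⟨U, V, hU, hV, hx, hy, hUV⟩ := isOpen_prod_iff.1 hW x y hxy
  rw [frequently_atTop]
  intro M
  obtain ⟨k, hk, h1, h2⟩ := h (n * (M + 1)) (by nlinarith) U V hU hV ⟨x, hx⟩ ⟨y, hy⟩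
  refine ⟨(M + 1) * k, by nlinarith, ?_⟩
  rw [← mul_assoc]
  exact hUV ⟨h1, h2⟩

theorem exists_PT [PolishSpace X] [Nonempty X] (hf : Continuous f) (hwm : WeaklyMixing f) :
    ∃ φ : C(KK, X), (∀ p q, p ≠ q → PT f (φ p) (φ q)) ∧ DenseRange φ := by
  have : Countable (countableBasis X) := (countable_countableBasis X).to_subtype
  let G : (ℕ × countableBasis X × countableBasis X) → Set (X × X) := fun i =>
    ⋃ k : ℕ, {p | f^[(i.1 + 1) * (k + 1)] p.1 ∈ i.2.1.1 ∧ f^[(i.1 + 1) * (k + 1)] p.2 ∈ i.2.2.1}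
  have hO : ∀ i, IsOpen (G i) := by
    intro i
    refine isOpen_iUnion fun k => ?_
    have hc := hf.iterate ((i.1 + 1) * (k + 1))
    exact ((isOpen_of_mem_countableBasis i.2.1.2).preimage (hc.comp continuous_fst)).inter
      ((isOpen_of_mem_countableBasis i.2.2.2).preimage (hc.comp continuous_snd))
  have hD : ∀ i, Dense (G i) := by
    intro i
    rw [dense_iff_inter_open]
    rintro W hW ⟨⟨x, y⟩, hxy⟩
    obtain ⟨U, V, hU, hV, hx, hy, hUV⟩ := isOpen_prod_iff.1 hW x y hxy
    obtain ⟨k, hk, ⟨a, ha, ha'⟩, ⟨b, hb, hb'⟩⟩ := wm_mult hf hwm (i.1 + 1) (by omega) U V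
      i.2.1.1 i.2.2.1 hU hV
      (isOpen_of_mem_countableBasis i.2.1.2) (isOpen_of_mem_countableBasis i.2.2.2)
      ⟨x, hx⟩ ⟨y, hy⟩ (nonempty_of_mem_countableBasis i.2.1.2)
      (nonempty_of_mem_countableBasis i.2.2.2)
    refine ⟨(a, b), hUV ⟨ha, hb⟩, mem_iUnion.2 ⟨k - 1, ?_⟩⟩
    have : k - 1 + 1 = k := by omega
    change f^[(i.1 + 1) * (k - 1 + 1)] a ∈ _ ∧ f^[(i.1 + 1) * (k - 1 + 1)] b ∈ _
    rw [this]
    exact ⟨ha', hb'⟩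
  obtain ⟨φ, h1, h2⟩ := mycielski G hO hD
  refine ⟨φ, ?_, h2⟩
  intro p q hpq n hn U V hU hV ⟨x, hx⟩ ⟨y, hy⟩
  obtain ⟨B, hB, hxB, hBU⟩ := (isBasis_countableBasis X).exists_subset_of_mem_open hx hU
  obtain ⟨C, hC, hyC, hCV⟩ := (isBasis_countableBasis X).exists_subset_of_mem_open hy hV
  obtain ⟨k, hk⟩ := mem_iUnion.1 (h1 p q hpq (n - 1, ⟨B, hB⟩, ⟨C, hC⟩))
  refine ⟨k + 1, by omega, ?_⟩
  have : n - 1 + 1 = n := by omega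
  simp only [this] at hk
  exact ⟨hBU hk.1, hCV hk.2⟩

theorem cantor_image [T2Space X] (φ : C(KK, X)) (hφ : Function.Injective φ) (j : ℕ) :
    IsCantorSet (range fun x : ℕ → Bool => φ (j, x)) := by
  have hc : Continuous fun x : ℕ → Bool => φ (j, x) := by fun_prop
  have hi : Function.Injective fun x : ℕ → Bool => φ (j, x) := fun x y h => by
    simpa using hφ h
  have hemb := (hc.isClosedEmbedding hi).isEmbedding
  have hcpt := isCompact_range hc
  refine ⟨range_nonempty _, hcpt, ⟨hcpt.isClosed, ?_⟩, ?_⟩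
  · rintro _ ⟨x, rfl⟩
    rw [accPt_iff_frequently]
    let y : ℕ → (ℕ → Bool) := fun n => Function.update x n (!x n)
    have hy : Tendsto y atTop (𝓝 x) := by
      rw [tendsto_pi_nhds]
      intro i
      refine tendsto_const_nhds.congr' ?_
      filter_upwards [eventually_gt_atTop i] with n hn
      simp only [y]
      rw [Function.update_of_ne (by omega)]
    have hyx : ∀ n, y n ≠ x := fun n h => by
      have := congrFun h n
      simp [y] at this
    exact ((hc.tendsto x).comp hy).frequently
      (Frequently.of_forall fun n => ⟨fun h => hyx n (hi h), y n, rfl⟩)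
  · exact hemb.isTotallyDisconnected_range.2 inferInstance

end Dyn

theorem liminf_zero_aux (u : ℕ → ℝ≥0∞) (h : ∀ ε > 0, ∃ᶠ k in atTop, u k < ε) :
    atTop.liminf u = 0 := by
  refine le_antisymm ?_ (zero_le)
  refine le_of_forall_gt fun ε hε => ?_
  obtain ⟨ε', h1, h2⟩ := exists_between hε
  exact (liminf_le_of_frequently_le' ((h ε' h1).mono fun _ h => h.le)).trans_lt h2

theorem limsup_aux (u : ℕ → ℝ≥0∞) (β : ℝ≥0∞) (h : ∀ c < β, ∃ᶠ k in atTop, c < u k) :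
    β ≤ atTop.limsup u :=
  le_of_forall_lt_imp_le_of_dense fun c hc =>
    le_limsup_of_frequently_le' ((h c hc).mono fun _ h => h.le)

section Fin
open Set TopologicalSpace Topology
variable {X : Type*} [MetricSpace X] {f : X → X}

theorem PT.liminf {a b : X} (h : PT f a b) (hf : Continuous f) {z : X} (hz : f z = z) (i j n : ℕ)
    (hn : 1 ≤ n) :
    atTop.liminf (fun k : ℕ => edist (f^[n * k] (f^[i] a)) (f^[n * k] (f^[j] b))) = 0 := by
  refine liminf_zero_aux _ fun ε hε => ?_
  have hi := hf.iterate i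
  have hj := hf.iterate j
  refine (h.frequently n hn {p | edist (f^[i] p.1) (f^[j] p.2) < ε} ?_ ⟨(z, z), ?_⟩).mono ?_
  · exact isOpen_lt (by fun_prop) continuous_const
  · change edist (f^[i] z) (f^[j] z) < ε
    rw [Function.iterate_fixed hz, Function.iterate_fixed hz, edist_self]; exact hε
  · intro k hk
    rw [← Function.iterate_add_apply, ← Function.iterate_add_apply, Nat.add_comm,
      Nat.add_comm (n * k) j, Function.iterate_add_apply, Function.iterate_add_apply f j]
    exact hk

theorem PT.limsup {a b : X} (h : PT f a b) (hf : Continuous f) (hwm : WeaklyMixing f) (i j n : ℕ)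
    (hn : 1 ≤ n) :
    EMetric.diam (Set.univ : Set X) ≤
    atTop.limsup (fun k : ℕ => edist (f^[n * k] (f^[i] a)) (f^[n * k] (f^[j] b))) := by
  refine limsup_aux _ _ fun c hc => ?_
  have hi := hf.iterate i
  have hj := hf.iterate j
  refine (h.frequently n hn {p | c < edist (f^[i] p.1) (f^[j] p.2)} ?_ ?_).mono ?_
  · exact isOpen_lt continuous_const (by fun_prop)
  · obtain ⟨x, y, hxy⟩ : ∃ x y : X, c < edist x y := by
      by_contra! hcon
      exact absurd hc (not_lt.2 (EMetric.diam_le fun x _ y _ => hcon x y))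
    have ho : IsOpen {p : X × X | c < edist p.1 p.2} := isOpen_lt continuous_const (by fun_prop)
    obtain ⟨⟨p, q⟩, hpq⟩ := ((wm_denseRange_iter hf hwm i).prodMap
      (wm_denseRange_iter hf hwm j)).exists_mem_open ho ⟨(x, y), hxy⟩
    exact ⟨(p, q), hpq⟩
  · intro k hk
    rw [← Function.iterate_add_apply, ← Function.iterate_add_apply, Nat.add_comm,
      Nat.add_comm (n * k) j, Function.iterate_add_apply, Function.iterate_add_apply f j]
    exact hk

theorem PT.liminf_self {a b : X} (h : PT f a b) (hf : Continuous f) {z : X} (hz : f z = z)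
    (i j n : ℕ) (hn : 1 ≤ n) :
    atTop.liminf (fun k : ℕ => edist (f^[n * k] (f^[i] a)) (f^[n * k] (f^[j] a))) = 0 := by
  refine liminf_zero_aux _ fun ε hε => ?_
  have hi := hf.iterate i
  have hj := hf.iterate j
  refine (h.frequently n hn {p | edist (f^[i] p.1) (f^[j] p.1) < ε} ?_ ⟨(z, z), ?_⟩).mono ?_
  · exact isOpen_lt (by fun_prop) continuous_const
  · change edist (f^[i] z) (f^[j] z) < ε
    rw [Function.iterate_fixed hz, Function.iterate_fixed hz, edist_self]; exact hε
  · intro k hk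
    rw [← Function.iterate_add_apply, ← Function.iterate_add_apply, Nat.add_comm,
      Nat.add_comm (n * k) j, Function.iterate_add_apply, Function.iterate_add_apply f j]
    exact hk

theorem PT.limsup_self {a b : X} (h : PT f a b) (hf : Continuous f) (hwm : WeaklyMixing f)
    (i l n : ℕ) (hn : 1 ≤ n) (hl : 1 ≤ l) :
    (⨅ (n : ℕ) (_ : 1 ≤ n), ⨆ x : X, edist (f^[n] x) x) ≤
    atTop.limsup (fun k : ℕ => edist (f^[n * k] (f^[l + i] a)) (f^[n * k] (f^[i] a))) := by
  refine limsup_aux _ _ fun c hc => ?_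
  have hi := hf.iterate i
  have hj := hf.iterate l
  refine (h.frequently n hn {p | c < edist (f^[l] (f^[i] p.1)) (f^[i] p.1)} ?_ ?_).mono ?_
  · exact isOpen_lt continuous_const (by fun_prop)
  · have hc' : c < ⨆ x : X, edist (f^[l] x) x := hc.trans_le (iInf₂_le l hl)
    obtain ⟨x, hx⟩ := lt_iSup_iff.1 hc'
    have ho : IsOpen {p : X | c < edist (f^[l] p) p} := isOpen_lt continuous_const (by fun_prop)
    obtain ⟨p, hp⟩ := (wm_denseRange_iter hf hwm i).exists_mem_open ho ⟨x, hx⟩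
    exact ⟨(p, p), hp⟩
  · intro k hk
    rw [← Function.iterate_add_apply, ← Function.iterate_add_apply, Nat.add_comm,
      Nat.add_comm (n * k) i, Function.iterate_add_apply, Function.iterate_add_apply f i,
      Function.iterate_add_apply f l i]
    exact hk

end Fin



theorem invariant_delta_scrambled_of_weaklyMixing_with_fixed_point
    {X : Type*} [MetricSpace X] [Infinite X]
    [TopologicalSpace.SeparableSpace X] [LocallyCompactSpace X]
    (f : X → X) (hf : Continuous f) (hwm : WeaklyMixing f)
    (hfix : ∃ z : X, f z = z)
    (β : ℝ≥0∞) (hβ : β = EMetric.diam (Set.univ : Set X))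
    (δ : ℝ≥0∞) (hδ : δ = ⨅ (n : ℕ) (_ : 1 ≤ n), ⨆ x : X, edist (f^[n] x) x) :
    ∃ S : ℕ → Set X,
      (∀ i j, i ≠ j → Disjoint (S i) (S j)) ∧
      (∀ j, IsCantorSet (S j)) ∧
      (∀ j, ∀ a ∈ S j, TotallyTransitivePoint f a) ∧
      Dense (⋃ j, S j) ∧
      (∀ n : ℕ, 1 ≤ n → ∀ a ∈ ⋃ j, S j, ∀ b ∈ ⋃ j, S j, a ≠ b →
        atTop.liminf (fun k : ℕ => edist (f^[n * k] a) (f^[n * k] b)) = 0 ∧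
        β ≤ atTop.limsup (fun k : ℕ => edist (f^[n * k] a) (f^[n * k] b))) ∧
      Dense (⋃ i : ℕ, f^[i] '' (⋃ j, S j)) ∧
      f '' (⋃ i : ℕ, f^[i] '' (⋃ j, S j)) ⊆ ⋃ i : ℕ, f^[i] '' (⋃ j, S j) ∧
      (∀ n : ℕ, 1 ≤ n →
        ∀ c ∈ ⋃ i : ℕ, f^[i] '' (⋃ j, S j), ∀ d ∈ ⋃ i : ℕ, f^[i] '' (⋃ j, S j), c ≠ d →
          atTop.liminf (fun k : ℕ => edist (f^[n * k] c) (f^[n * k] d)) = 0 ∧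
          δ ≤ atTop.limsup (fun k : ℕ => edist (f^[n * k] c) (f^[n * k] d))) := by
  have : PolishSpace X := polish_of_lc
  obtain ⟨z, hz⟩ := hfix
  obtain ⟨φ, h1, h2⟩ := exists_PT hf hwm
  have hinj : Function.Injective φ := by
    intro p q hpq
    by_contra hne
    have h := h1 p q hne
    obtain ⟨x, y, hxy⟩ := exists_pair_ne X
    obtain ⟨U, V, hU, hV, hx, hy, hUV⟩ := t2_separation hxy
    obtain ⟨k, -, h3, h4⟩ := h 1 le_rfl U V hU hV ⟨x, hx⟩ ⟨y, hy⟩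
    rw [hpq] at h3
    exact Set.disjoint_left.1 hUV h3 h4
  have hU : (⋃ j : ℕ, Set.range fun x : ℕ → Bool => φ (j, x)) = Set.range φ := by
    ext y
    simp [Set.mem_iUnion]
  have hother : ∀ p : KK, ∃ b, PT f (φ p) b := fun p =>
    ⟨φ (p.1 + 1, p.2), h1 _ _ fun h => by simpa using congrArg Prod.fst h⟩
  have hδβ : δ ≤ β := by
    rw [hδ, hβ]
    refine (iInf₂_le 1 le_rfl).trans (iSup_le fun x => ?_)
    exact EMetric.edist_le_diam_of_mem trivial trivial
  refine ⟨fun j => Set.range fun x : ℕ → Bool => φ (j, x), ?_, fun j => cantor_image φ hinj j,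
    ?_, ?_, ?_, ?_, ?_, ?_⟩
  · intro i j hij
    rw [Set.disjoint_left]
    rintro _ ⟨x, rfl⟩ ⟨y, hy⟩
    exact hij (congrArg Prod.fst (hinj hy)).symm
  · rintro j _ ⟨x, rfl⟩ n hn
    obtain ⟨b, hb⟩ := hother (j, x)
    rw [dense_iff_inter_open]
    intro U hU hUn
    obtain ⟨k, -, h3, -⟩ := hb n hn U Set.univ hU isOpen_univ hUn Set.univ_nonempty
    exact ⟨_, h3, k, rfl⟩
  · rw [hU]; exact h2
  · rw [hU]
    rintro n hn _ ⟨p, rfl⟩ _ ⟨q, rfl⟩ hpq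
    have h := h1 p q fun h => hpq (congrArg φ h)
    exact ⟨h.liminf hf hz 0 0 n hn, hβ ▸ h.limsup hf hwm 0 0 n hn⟩
  · refine Dense.mono ?_ h2
    rw [hU]
    exact fun y hy => Set.mem_iUnion.2 ⟨0, y, hy, rfl⟩
  · rintro _ ⟨y, hy, rfl⟩
    obtain ⟨i, x, hx, rfl⟩ := Set.mem_iUnion.1 hy
    exact Set.mem_iUnion.2 ⟨i + 1, x, hx, Function.iterate_succ_apply' f i x⟩
  · rw [hU]
    rintro n hn c hc d hd hcd
    obtain ⟨i, _, ⟨p, rfl⟩, rfl⟩ := Set.mem_iUnion.1 hc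
    obtain ⟨j, _, ⟨q, rfl⟩, rfl⟩ := Set.mem_iUnion.1 hd
    by_cases hpq : p = q
    · subst hpq
      obtain ⟨b, hb⟩ := hother p
      refine ⟨hb.liminf_self hf hz i j n hn, ?_⟩
      rw [hδ]
      rcases lt_trichotomy i j with hij | hij | hij
      · obtain ⟨l, rfl⟩ : ∃ l, j = l + i := ⟨j - i, by omega⟩
        have := hb.limsup_self hf hwm i l n hn (by omega)
        simpa only [edist_comm] using this
      · exact absurd (by rw [hij]) hcd
      · obtain ⟨l, rfl⟩ : ∃ l, i = l + j := ⟨i - j, by omega⟩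
        exact hb.limsup_self hf hwm j l n hn (by omega)
    · have h := h1 p q hpq
      exact ⟨h.liminf hf hz i j n hn, hδβ.trans (hβ ▸ h.limsup hf hwm i j n hn)⟩
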